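/- Eventual convergence of the Contour algorithm: there exists a natural number K such that for all k ≥ K and all vertices v, L_k(v) equals the minimum vertex of the connected component of v; consequently, for all k ≥ K, two vertices receive the same label under L_k if and only if they lie in the same connected component of G. -/

import Mathlib

variable {V : Type*} [Fintype V] [LinearOrder V] [Nonempty V]

/-- One-step two-order Contour update `U`: `U(L)(w)` is the minimum of the finite
nonempty set `{L(L(w))} ∪ {L(L(v)) : v adjacent to w} ∪
{L(L(v)) : v adjacent to some u with L(u) = w}`. -/
def contourStep (G : SimpleGraph V) [DecidableRel G.Adj] (L : V → V) : V → V :=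
  fun w =>
    (insert (L (L w))
      ((G.neighborFinset w).image (fun v => L (L v)) ∪
        (Finset.univ.filter (fun v => ∃ u, G.Adj v u ∧ L u = w)).image
          (fun v => L (L v)))).min' (Finset.insert_nonempty _ _)

/-- Synchronous two-order Contour labeling sequence: `L_0 = id`, `L_{k+1} = U(L_k)`. -/
def contourSeq (G : SimpleGraph V) [DecidableRel G.Adj] : ℕ → V → V
  | 0 => id
  | (k + 1) => contourStep G (contourSeq G k)

/-- The minimum vertex of the connected component of `v`. -/
noncomputable def compMin (G : SimpleGraph V) (v : V) : V :=
  haveI : DecidablePred (G.Reachable v) := Classical.decPred _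
  (Finset.univ.filter (G.Reachable v)).min'
    ⟨v, Finset.mem_filter.mpr ⟨Finset.mem_univ v, SimpleGraph.Reachable.refl v⟩⟩

theorem contourStep_le_self (G : SimpleGraph V) [DecidableRel G.Adj] (L : V → V) (w : V) :
    contourStep G L w ≤ L (L w) :=
  Finset.min'_le _ _ (Finset.mem_insert_self _ _)

theorem contourStep_le_adj (G : SimpleGraph V) [DecidableRel G.Adj] (L : V → V) {w v : V}
    (h : G.Adj w v) : contourStep G L w ≤ L (L v) := by
  apply Finset.min'_le
  refine Finset.mem_insert_of_mem (Finset.mem_union_left _ (Finset.mem_image.mpr ⟨v, ?_, rfl⟩))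
  simpa using h

theorem contourStep_reachable (G : SimpleGraph V) [DecidableRel G.Adj] (L : V → V)
    (hL : ∀ v, G.Reachable v (L v)) (w : V) : G.Reachable w (contourStep G L w) := by
  have hLL : ∀ v, G.Reachable v (L (L v)) := fun v => (hL v).trans (hL _)
  have h : contourStep G L w ∈ _ := Finset.min'_mem _ (Finset.insert_nonempty _ _)
  rcases Finset.mem_insert.mp h with h | h
  · rw [h]; exact hLL w
  · rcases Finset.mem_union.mp h with h | h
    · obtain ⟨v, hv, h⟩ := Finset.mem_image.mp h
      rw [← h]
      have hv : G.Adj w v := by simpa using hv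
      exact hv.reachable.trans (hLL v)
    · obtain ⟨v, hv, h⟩ := Finset.mem_image.mp h
      rw [← h]
      obtain ⟨u, hu, rfl⟩ := (Finset.mem_filter.mp hv).2
      exact (hL u).symm.trans (hu.symm.reachable.trans (hLL v))

theorem contourSeq_reachable (G : SimpleGraph V) [DecidableRel G.Adj] (k : ℕ) (v : V) :
    G.Reachable v (contourSeq G k v) := by
  induction k generalizing v with
  | zero => exact SimpleGraph.Reachable.refl v
  | succ k ih => exact contourStep_reachable G _ ih v

theorem contourSeq_le (G : SimpleGraph V) [DecidableRel G.Adj] (k : ℕ) (v : V) :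
    contourSeq G k v ≤ v := by
  induction k generalizing v with
  | zero => exact le_refl v
  | succ k ih => exact (contourStep_le_self G _ v).trans ((ih _).trans (ih v))

theorem contourSeq_antitone (G : SimpleGraph V) [DecidableRel G.Adj] :
    Antitone (contourSeq G) :=
  antitone_nat_of_succ_le fun k v =>
    (contourStep_le_self G _ v).trans (contourSeq_le G k _)

theorem compMin_reachable (G : SimpleGraph V) (v : V) : G.Reachable v (compMin G v) := by
  letI : DecidablePred (G.Reachable v) := Classical.decPred _
  have h : compMin G v ∈ Finset.univ.filter (G.Reachable v) := Finset.min'_mem _ _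
  exact (Finset.mem_filter.mp h).2

theorem compMin_le (G : SimpleGraph V) {v w : V} (h : G.Reachable v w) : compMin G v ≤ w := by
  unfold compMin
  apply Finset.min'_le
  simpa using h

theorem compMin_congr (G : SimpleGraph V) {v w : V} (h : G.Reachable v w) :
    compMin G v = compMin G w :=
  le_antisymm (compMin_le G (h.trans (compMin_reachable G w)))
    (compMin_le G (h.symm.trans (compMin_reachable G v)))

theorem contourSeq_eq_compMin (G : SimpleGraph V) [DecidableRel G.Adj] (k : ℕ)
    (hk : contourStep G (contourSeq G k) = contourSeq G k) (v : V) :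
    contourSeq G k v = compMin G v := by
  have hadj : ∀ a b, G.Adj a b → contourSeq G k a ≤ contourSeq G k b := fun a b h => by
    have h1 := contourStep_le_adj G (contourSeq G k) h
    rw [hk] at h1
    exact h1.trans (contourSeq_le G k _)
  have hw : ∀ a b, G.Walk a b → contourSeq G k a ≤ contourSeq G k b := fun a b p => by
    induction p with
    | nil => exact le_refl _
    | cons h _ ih => exact (hadj _ _ h).trans ih
  obtain ⟨p⟩ := compMin_reachable G v
  exact le_antisymm ((hw _ _ p).trans (contourSeq_le G k _))
    (compMin_le G (contourSeq_reachable G k v))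

/-- Eventual convergence of the Contour algorithm: there exists `K` such that for all
`k ≥ K` and all `v`, `L_k(v)` is the minimum vertex of the component of `v`; and hence
for all `k ≥ K`, two vertices get the same label iff they are in the same component. -/
theorem contour_eventual_convergence (G : SimpleGraph V) [DecidableRel G.Adj] :
    ∃ K : ℕ,
      (∀ k : ℕ, K ≤ k → ∀ v : V, contourSeq G k v = compMin G v) ∧
      (∀ k : ℕ, K ≤ k → ∀ u v : V,
        (contourSeq G k u = contourSeq G k v ↔ G.Reachable u v)) := by
  obtain ⟨K, hK⟩ := WellFoundedGT.monotone_chain_condition (α := (V → V)ᵒᵈ)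
    ⟨fun k => OrderDual.toDual (contourSeq G k), fun _ _ h => contourSeq_antitone G h⟩
  have hK : ∀ m, K ≤ m → contourSeq G K = contourSeq G m := hK
  have main : ∀ k : ℕ, K ≤ k → ∀ v : V, contourSeq G k v = compMin G v := fun k hk v => by
    apply contourSeq_eq_compMin
    exact (hK (k + 1) (by omega)).symm.trans (hK k hk)
  refine ⟨K, main, fun k hk u v => ⟨fun h => ?_, fun h => ?_⟩⟩
  · have := contourSeq_reachable G k v
    rw [← h] at this
    exact (contourSeq_reachable G k u).trans this.symm
  · rw [main k hk, main k hk, compMin_congr G h]
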